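/- For any x, y ∈ 𝕆 with ‖x‖ = ‖y‖ = 1, there exists a triality triple (A,B,C) with A(1) = x and B(1) = y. (That is, the action of Spin₈, realized as the group of triality triples, is transitive on S⁷ × S⁷.) -/

import Mathlib

noncomputable section

/-- The octonions as the Cayley–Dickson double of the quaternions. -/
abbrev Oct : Type := Quaternion ℝ × Quaternion ℝ

namespace Oct

/-- Cayley–Dickson multiplication: (a,b)·(c,d) = (ac − d̄b, da + bc̄). -/
def mul (x y : Oct) : Oct :=
  (x.1 * y.1 - star y.2 * x.2, y.2 * x.1 + x.2 * star y.1)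

/-- The unit 1 = (1,0). -/
def one : Oct := (1, 0)

/-- Octonionic conjugation κ(a,b) = (ā, −b). -/
def conj (x : Oct) : Oct := (star x.1, -x.2)

/-- The squared Euclidean norm ‖(a,b)‖² = ‖a‖² + ‖b‖². -/
def normSq (x : Oct) : ℝ := ‖x.1‖ ^ 2 + ‖x.2‖ ^ 2

/-- Left multiplication L(s) : y ↦ s·y. -/
def L (s : Oct) : Oct → Oct := fun y => mul s y

/-- A linear automorphism of 𝕆 is an isometry if it preserves the Euclidean norm. -/
def IsIsometry (A : Oct ≃ₗ[ℝ] Oct) : Prop := ∀ x, normSq (A x) = normSq x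

/-- A triality triple: ℝ-linear isometric bijections with B(x·y) = (Cx)·(Ay). -/
def IsTriality (A B C : Oct ≃ₗ[ℝ] Oct) : Prop :=
  IsIsometry A ∧ IsIsometry B ∧ IsIsometry C ∧
    ∀ x y : Oct, B (mul x y) = mul (C x) (A y)

/-- Octonionic conjugation κ as an ℝ-linear equivalence. -/
def kappa : Oct ≃ₗ[ℝ] Oct where
  toFun := conj
  invFun := conj
  left_inv := fun x => by simp [conj]
  right_inv := fun x => by simp [conj]
  map_add' := fun x y => by simp [conj, Prod.ext_iff, star_add, neg_add, add_comm]
  map_smul' := fun r x => by simp [conj, Prod.ext_iff]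

/-- D ↦ κ∘D∘κ. -/
def conjOp (D : Oct ≃ₗ[ℝ] Oct) : Oct ≃ₗ[ℝ] Oct := kappa.trans (D.trans kappa)

/-- Triples of ℝ-linear bijections of 𝕆. -/
abbrev Triple := (Oct ≃ₗ[ℝ] Oct) × (Oct ≃ₗ[ℝ] Oct) × (Oct ≃ₗ[ℝ] Oct)

/-- The triality map τ(A,B,C) = (κBκ, κCκ, A). -/
def tauMap (T : Triple) : Triple := (conjOp T.2.1, conjOp T.2.2, T.1)

/-- The outer involution σ(A,B,C) = (B, A, κCκ). -/
def sigmaMap (T : Triple) : Triple := (T.2.1, T.1, conjOp T.2.2)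

/-- The induced map on S⁷ × S⁷: t(x,y) = (ȳ, x·ȳ). -/
def tS (p : Oct × Oct) : Oct × Oct := (conj p.2, mul p.1 (conj p.2))

/-- The swap s(x,y) = (y,x). -/
def swap (p : Oct × Oct) : Oct × Oct := (p.2, p.1)

end Oct

namespace Oct

lemma oct_normSq_eq (x : Oct) : normSq x = x.1.re ^ 2 + x.1.imI ^ 2 + x.1.imJ ^ 2 + x.1.imK ^ 2
    + (x.2.re ^ 2 + x.2.imI ^ 2 + x.2.imJ ^ 2 + x.2.imK ^ 2) := by
  simp only [normSq, sq ‖_‖, ← Quaternion.normSq_eq_norm_mul_self, Quaternion.normSq_def']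

lemma oct_normSq_mul (x y : Oct) : normSq (mul x y) = normSq x * normSq y := by
  simp only [oct_normSq_eq, mul, Quaternion.re_sub, Quaternion.imI_sub,
    Quaternion.imJ_sub, Quaternion.imK_sub, Quaternion.re_add, Quaternion.imI_add,
    Quaternion.imJ_add, Quaternion.imK_add, Quaternion.re_mul, Quaternion.imI_mul,
    Quaternion.imJ_mul, Quaternion.imK_mul, Quaternion.re_star, Quaternion.imI_star,
    Quaternion.imJ_star, Quaternion.imK_star]
  ring

lemma oct_normSq_conj (x : Oct) : normSq (conj x) = normSq x := by
  simp [normSq, conj]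

lemma oct_conj_conj (x : Oct) : conj (conj x) = x := by
  simp [conj]

lemma oct_alt_left (a x : Oct) : mul (conj a) (mul a x) = normSq a • x := by
  ext <;> simp [oct_normSq_eq, mul, conj] <;> ring

lemma oct_alt_right (a x : Oct) : mul (mul x a) (conj a) = normSq a • x := by
  ext <;> simp [oct_normSq_eq, mul, conj] <;> ring

lemma oct_moufang1 (a x z : Oct) : mul a (mul x (mul a z)) = mul (mul (mul a x) a) z := by
  ext <;> simp only [mul, Quaternion.re_sub, Quaternion.imI_sub,
    Quaternion.imJ_sub, Quaternion.imK_sub, Quaternion.re_add, Quaternion.imI_add,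
    Quaternion.imJ_add, Quaternion.imK_add, Quaternion.re_mul, Quaternion.imI_mul,
    Quaternion.imJ_mul, Quaternion.imK_mul, Quaternion.re_star, Quaternion.imI_star,
    Quaternion.imJ_star, Quaternion.imK_star] <;> ring

lemma oct_moufang2 (a x z : Oct) : mul (mul (mul z a) x) a = mul z (mul (mul a x) a) := by
  ext <;> simp only [mul, Quaternion.re_sub, Quaternion.imI_sub,
    Quaternion.imJ_sub, Quaternion.imK_sub, Quaternion.re_add, Quaternion.imI_add,
    Quaternion.imJ_add, Quaternion.imK_add, Quaternion.re_mul, Quaternion.imI_mul,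
    Quaternion.imJ_mul, Quaternion.imK_mul, Quaternion.re_star, Quaternion.imI_star,
    Quaternion.imJ_star, Quaternion.imK_star] <;> ring

lemma oct_mul_add (a x y : Oct) : mul a (x + y) = mul a x + mul a y := by
  ext <;> simp [mul] <;> ring
lemma oct_add_mul (a x y : Oct) : mul (x + y) a = mul x a + mul y a := by
  ext <;> simp [mul] <;> ring
lemma oct_mul_smul (r : ℝ) (a x : Oct) : mul a (r • x) = r • mul a x := by
  ext <;> simp [mul] <;> ring
lemma oct_smul_mul (r : ℝ) (a x : Oct) : mul (r • x) a = r • mul x a := by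
  ext <;> simp [mul] <;> ring

def lE (a : Oct) (ha : normSq a = 1) : Oct ≃ₗ[ℝ] Oct where
  toFun x := mul a x
  invFun x := mul (conj a) x
  left_inv x := by simp [oct_alt_left, ha]
  right_inv x := by
    have := oct_alt_left (conj a) x
    rwa [oct_conj_conj, oct_normSq_conj, ha, one_smul] at this
  map_add' x y := oct_mul_add a x y
  map_smul' r x := oct_mul_smul r a x

def rE (a : Oct) (ha : normSq a = 1) : Oct ≃ₗ[ℝ] Oct where
  toFun x := mul x a
  invFun x := mul x (conj a)
  left_inv x := by simp [oct_alt_right, ha]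
  right_inv x := by
    have := oct_alt_right (conj a) x
    rwa [oct_conj_conj, oct_normSq_conj, ha, one_smul] at this
  map_add' x y := oct_add_mul a x y
  map_smul' r x := oct_smul_mul r a x

lemma lE_iso (a ha) : IsIsometry (lE a ha) := fun x => by
  simp [lE, oct_normSq_mul, ha]

lemma rE_iso (a ha) : IsIsometry (rE a ha) := fun x => by
  simp [rE, oct_normSq_mul, ha]

lemma trans_iso {A B : Oct ≃ₗ[ℝ] Oct} (hA : IsIsometry A) (hB : IsIsometry B) :
    IsIsometry (A.trans B) := fun x => by
  rw [LinearEquiv.trans_apply, hB, hA]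

lemma trans_triality {A B C A' B' C' : Oct ≃ₗ[ℝ] Oct} (h : IsTriality A B C)
    (h' : IsTriality A' B' C') : IsTriality (A.trans A') (B.trans B') (C.trans C') := by
  refine ⟨trans_iso h.1 h'.1, trans_iso h.2.1 h'.2.1, trans_iso h.2.2.1 h'.2.2.1, fun x y => ?_⟩
  simp only [LinearEquiv.trans_apply, h.2.2.2, h'.2.2.2]

lemma triality1 (a : Oct) (ha : normSq a = 1) (ha' : normSq (conj a) = 1) :
    IsTriality (lE (conj a) ha') (lE a ha) ((lE a ha).trans (rE a ha)) := by
  refine ⟨lE_iso _ _, lE_iso _ _, trans_iso (lE_iso _ _) (rE_iso _ _), fun x y => ?_⟩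
  change mul a (mul x y) = mul (mul (mul a x) a) (mul (conj a) y)
  rw [← oct_moufang1]
  have := oct_alt_left (conj a) y
  rw [oct_conj_conj, oct_normSq_conj, ha, one_smul] at this
  rw [this]

lemma triality2 (a : Oct) (ha : normSq a = 1) (ha' : normSq (conj a) = 1) :
    IsTriality ((lE a ha).trans (rE a ha)) (rE a ha) (rE (conj a) ha') := by
  refine ⟨trans_iso (lE_iso _ _) (rE_iso _ _), rE_iso _ _, rE_iso _ _, fun x y => ?_⟩
  change mul (mul x y) a = mul (mul x (conj a)) (mul (mul a y) a)
  rw [← oct_moufang2]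
  have := oct_alt_right (conj a) x
  rw [oct_conj_conj, oct_normSq_conj, ha, one_smul] at this
  rw [this]

lemma q_re0 : (0 : Quaternion ℝ).re = 0 := rfl
lemma q_i0 : (0 : Quaternion ℝ).imI = 0 := rfl
lemma q_j0 : (0 : Quaternion ℝ).imJ = 0 := rfl
lemma q_k0 : (0 : Quaternion ℝ).imK = 0 := rfl
lemma q_re1 : (1 : Quaternion ℝ).re = 1 := rfl
lemma q_i1 : (1 : Quaternion ℝ).imI = 0 := rfl
lemma q_j1 : (1 : Quaternion ℝ).imJ = 0 := rfl
lemma q_k1 : (1 : Quaternion ℝ).imK = 0 := rfl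

lemma exists_v (q : Quaternion ℝ) : ∃ v : Quaternion ℝ,
    v.re ^ 2 + v.imI ^ 2 + v.imJ ^ 2 + v.imK ^ 2 = 1 ∧
    v.re * q.re + v.imI * q.imI + v.imJ * q.imJ + v.imK * q.imK = 0 := by
  by_cases h : q.re ^ 2 + q.imI ^ 2 = 0
  · have h1 : q.re = 0 := by nlinarith [sq_nonneg q.re, sq_nonneg q.imI]
    exact ⟨⟨1, 0, 0, 0⟩, by simp, by simp [h1]⟩
  · have hp : 0 < q.re ^ 2 + q.imI ^ 2 := lt_of_le_of_ne (by positivity) (Ne.symm h)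
    have hs := Real.sq_sqrt hp.le
    have hs0 := Real.sqrt_pos.2 hp
    set s := √(q.re ^ 2 + q.imI ^ 2)
    refine ⟨⟨-q.imI / s, q.re / s, 0, 0⟩, ?_, ?_⟩
    · simp only []
      field_simp
      linarith
    · simp only []
      field_simp
      ring

/-- Every unit octonion is a product of two imaginary units. -/
lemma exists_bc (y : Oct) (hy : normSq y = 1) : ∃ b c : Oct, normSq b = 1 ∧ normSq c = 1 ∧
    mul b b = (-1 : ℝ) • one ∧ mul c c = (-1 : ℝ) • one ∧ mul b c = y := by
  have key : ∀ c : Oct, normSq c = 1 → c.1.re = 0 → mul c c = (-1 : ℝ) • one := by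
    intro c hc h0
    have : mul c c = (-normSq c) • one := by
      ext <;> simp [oct_normSq_eq, mul, one, h0, q_re0, q_i0, q_j0, q_k0, q_re1, q_i1, q_j1, q_k1] <;> ring
    rw [this, hc]
  obtain ⟨v, hv, hvy⟩ := exists_v y.2
  have hb : normSq ((0, v) : Oct) = 1 := by simp [oct_normSq_eq, hv, q_re0, q_i0, q_j0, q_k0]
  have hb' := hb
  rw [← oct_normSq_conj] at hb'
  have hc : normSq (mul (conj (0, v)) y) = 1 := by rw [oct_normSq_mul, hb', hy, one_mul]
  refine ⟨(0, v), mul (conj (0, v)) y, hb, hc, key _ hb rfl, key _ hc ?_, ?_⟩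
  · simp [mul, conj]; linarith
  · have := oct_alt_left (conj (0, v)) y
    rwa [oct_conj_conj, hb', one_smul] at this

lemma oct_one_mul (x : Oct) : mul one x = x := by ext <;> simp [mul, one]
lemma oct_mul_one (x : Oct) : mul x one = x := by ext <;> simp [mul, one]

end Oct

open Oct

/-- for any unit octonions x, y there is a triality triple with
A(1) = x and B(1) = y (transitivity of Spin₈ on S⁷ × S⁷). -/
theorem spin8_transitive_on_S7xS7 (x y : Oct) (hx : normSq x = 1) (hy : normSq y = 1) :
    ∃ A B C : Oct ≃ₗ[ℝ] Oct, IsTriality A B C ∧ A one = x ∧ B one = y := by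
  obtain ⟨b, c, hb, hc, hbb, hcc, hbc⟩ := exists_bc (mul x y) (by rw [oct_normSq_mul, hx, hy, one_mul])
  have hx' : normSq (conj x) = 1 := by rw [oct_normSq_conj, hx]
  refine ⟨_, _, _, trans_triality (trans_triality
    (triality2 b hb (by rw [oct_normSq_conj, hb])) (triality2 c hc (by rw [oct_normSq_conj, hc])))
    (triality1 (conj x) hx' (by rw [oct_conj_conj, hx])), ?_, ?_⟩
  · change mul (conj (conj x)) (mul (mul c (mul (mul b one) b)) c) = x
    rw [oct_conj_conj, oct_mul_one, hbb, oct_mul_smul, oct_mul_one, oct_smul_mul, hcc, smul_smul]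
    norm_num [oct_mul_one]
  · change mul (conj x) (mul (mul one b) c) = y
    rw [oct_one_mul, hbc, oct_alt_left, hx, one_smul]
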